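/- arXiv:1501.07505 — 2 statements merged into one kernel-verified Lean document; each statement's English description precedes it below -/
import Mathlib

section
/- There exists a constant C > 0 such that for every 3×3 real matrix F with det F > 0 one has dist²(F, SO(3)) ≤ C · Σ_{i=1}^{6} (|F wᵢ| − 1)², where dist(F, SO(3)) is the Euclidean (Frobenius) distance from F to the set of rotation matrices SO(3). -/
/- STATEMENT 0: Discrete rigidity estimate for the regular tetrahedron
(Lemma `lemma:tetra`): there is `C > 0` such that for every `F ∈ GL⁺(3)`,
`dist²(F, SO(3)) ≤ C ∑ᵢ (|F wᵢ| − 1)²`, where `w₁,…,w₆` are the edge vectors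
of a regular tetrahedron of edge length 1. -/

noncomputable section

open scoped BigOperators

/-- The special orthogonal group SO(3) as a set of 3×3 real matrices. -/
def SO3 : Set (Matrix (Fin 3) (Fin 3) ℝ) :=
  {R | R.transpose * R = 1 ∧ R.det = 1}

/-- Square of the Frobenius norm of a 3×3 matrix. -/
def frobSq (F : Matrix (Fin 3) (Fin 3) ℝ) : ℝ :=
  ∑ i : Fin 3, ∑ j : Fin 3, (F i j) ^ 2

/-- Square of the (Frobenius) distance of `F` from `SO(3)`:
the infimum of `|F − R|²` over `R ∈ SO(3)`. -/
def distSqSO3 (F : Matrix (Fin 3) (Fin 3) ℝ) : ℝ :=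
  sInf {s : ℝ | ∃ R ∈ SO3, s = frobSq (F - R)}

/-- Euclidean norm on ℝ³. -/
def enorm3 (v : Fin 3 → ℝ) : ℝ :=
  Real.sqrt (∑ i : Fin 3, (v i) ^ 2)

/-- The six edge vectors of the regular tetrahedron of edge length 1:
`w₁ = (1,0,0)`, `w₂ = (1/2, √3/2, 0)`, `w₃ = w₂ − w₁`,
`w₄ = (1/2, √3/6, √6/3)`, `w₅ = w₄ − w₂`, `w₆ = w₄ − w₁`. -/
def tetraW : Fin 6 → (Fin 3 → ℝ) :=
  ![![1, 0, 0],
    ![1/2, Real.sqrt 3 / 2, 0],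
    ![-(1/2), Real.sqrt 3 / 2, 0],
    ![1/2, Real.sqrt 3 / 6, Real.sqrt 6 / 3],
    ![0, Real.sqrt 3 / 6 - Real.sqrt 3 / 2, Real.sqrt 6 / 3],
    ![-(1/2), Real.sqrt 3 / 6, Real.sqrt 6 / 3]]

open scoped MatrixOrder in
lemma exists_polar (G : Matrix (Fin 3) (Fin 3) ℝ) (hG : G.PosSemidef) :
    ∃ U : Matrix (Fin 3) (Fin 3) ℝ, U.PosSemidef ∧ U * U = G := by
  refine ⟨CFC.sqrt G, ?_, ?_⟩
  · exact Matrix.nonneg_iff_posSemidef.mp (CFC.sqrt_nonneg G)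
  · exact CFC.sqrt_mul_sqrt_self G (Matrix.nonneg_iff_posSemidef.mpr hG)

lemma frobSq_eq_trace (M : Matrix (Fin 3) (Fin 3) ℝ) :
    frobSq M = (M.transpose * M).trace := by
  simp [frobSq, Matrix.trace, Matrix.mul_apply, Fin.sum_univ_three]
  ring

lemma frobSq_sub_one_le (U : Matrix (Fin 3) (Fin 3) ℝ) (hU : U.PosSemidef) :
    frobSq (U - 1) ≤ frobSq (U * U - 1) := by
  have hT : U.transpose = U := by
    have := hU.isHermitian.eq
    rwa [Matrix.conjTranspose_eq_transpose_of_trivial] at this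
  have h1 := hU.conjTranspose_mul_mul_same (U - 1)
  have h2 := (Matrix.posSemidef_conjTranspose_mul_self U).conjTranspose_mul_mul_same (U - 1)
  have t1 := h1.trace_nonneg
  have t2 := h2.trace_nonneg
  simp only [Matrix.conjTranspose_eq_transpose_of_trivial, Matrix.transpose_sub, hT,
    Matrix.transpose_one] at t1 t2
  rw [frobSq_eq_trace, frobSq_eq_trace]
  simp only [Matrix.transpose_sub, hT, Matrix.transpose_one, Matrix.transpose_mul]
  have key : (U * U - 1) * (U * U - 1) = (U - 1) * (U - 1) + (U - 1) * (U * U) * (U - 1)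
      + (2 : ℝ) • ((U - 1) * U * (U - 1)) := by
    rw [two_smul]; noncomm_ring
  rw [key, Matrix.trace_add, Matrix.trace_add, Matrix.trace_smul, smul_eq_mul]
  linarith

lemma dist_le (F R : Matrix (Fin 3) (Fin 3) ℝ) (hR : R ∈ SO3) :
    distSqSO3 F ≤ frobSq (F - R) := by
  apply csInf_le
  · refine ⟨0, ?_⟩
    rintro s ⟨R, -, rfl⟩
    unfold frobSq; positivity
  · exact ⟨R, hR, rfl⟩

lemma dist_le_gram (F : Matrix (Fin 3) (Fin 3) ℝ) (hF : 0 < F.det) :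
    distSqSO3 F ≤ frobSq (F.transpose * F - 1) := by
  have hG : (F.transpose * F).PosSemidef := by
    have := Matrix.posSemidef_conjTranspose_mul_self F
    rwa [Matrix.conjTranspose_eq_transpose_of_trivial] at this
  obtain ⟨U, hU, hUU⟩ := exists_polar _ hG
  have hT : U.transpose = U := by
    have := hU.isHermitian.eq
    rwa [Matrix.conjTranspose_eq_transpose_of_trivial] at this
  have hd : U.det * U.det = F.det * F.det := by
    rw [← Matrix.det_mul, hUU, Matrix.det_mul, Matrix.det_transpose]
  have hd0 : 0 ≤ U.det := hU.det_nonneg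
  have hdU : U.det = F.det := by nlinarith
  have hu : IsUnit U.det := by rw [hdU]; exact hF.ne'.isUnit
  have hRU : (F * U⁻¹) * U = F := by rw [Matrix.mul_assoc, Matrix.nonsing_inv_mul _ hu, mul_one]
  have hO : (F * U⁻¹).transpose * (F * U⁻¹) = 1 := by
    rw [Matrix.transpose_mul, Matrix.transpose_nonsing_inv, hT]
    calc U⁻¹ * F.transpose * (F * U⁻¹) = U⁻¹ * (F.transpose * F) * U⁻¹ := by
          simp only [Matrix.mul_assoc]
      _ = (U⁻¹ * U) * (U * U⁻¹) := by rw [← hUU]; simp only [Matrix.mul_assoc]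
      _ = 1 := by rw [Matrix.nonsing_inv_mul _ hu, Matrix.mul_nonsing_inv _ hu, mul_one]
  have hR : F * U⁻¹ ∈ SO3 := by
    refine ⟨hO, ?_⟩
    have := congrArg Matrix.det hRU
    rw [Matrix.det_mul, hdU] at this
    exact mul_right_cancel₀ hF.ne' (by rw [this, one_mul])
  refine (dist_le F _ hR).trans ?_
  have e : F - F * U⁻¹ = (F * U⁻¹) * (U - 1) := by rw [mul_sub, hRU, mul_one]
  have : frobSq (F - F * U⁻¹) = frobSq (U - 1) := by
    rw [e, frobSq_eq_trace, frobSq_eq_trace, Matrix.transpose_mul, Matrix.mul_assoc,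
      ← Matrix.mul_assoc _ _ (U - 1), hO, one_mul]
  rw [this, ← hUU]
  exact frobSq_sub_one_le U hU

lemma quad_bound (a b c x y z e1 e2 e3 e4 e5 e6 : ℝ)
    (h1 : e1 = a) (h2 : e2 = a / 4 + x / 2 + 3 / 4 * b) (h3 : e3 = a / 4 - x / 2 + 3 / 4 * b)
    (h4 : e4 = a / 4 + b / 12 + 2 / 3 * c + x / 6 + z / 3 + y / 3)
    (h5 : e5 = b / 3 + 2 / 3 * c - 2 / 3 * y)
    (h6 : e6 = a / 4 + b / 12 + 2 / 3 * c - x / 6 - z / 3 + y / 3) :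
    a ^ 2 + b ^ 2 + c ^ 2 + 2 / 3 * x ^ 2 + 1 / 3 * z ^ 2 + y ^ 2 ≤
      4 * (e1 ^ 2 + e2 ^ 2 + e3 ^ 2 + e4 ^ 2 + e5 ^ 2 + e6 ^ 2) := by
  rw [h1, h2, h3, h4, h5, h6]
  nlinarith [sq_nonneg ((1) * a + (5/12) * b + (1/3) * c + (1/6) * y),
    sq_nonneg ((1) * b + (4/17) * c + (-2/7) * y),
    sq_nonneg ((1) * c),
    sq_nonneg ((1) * x + (2/7) * z),
    sq_nonneg ((1) * y),
    sq_nonneg ((1) * z)]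

lemma frob_gram_le (F : Matrix (Fin 3) (Fin 3) ℝ) :
    frobSq (F.transpose * F - 1) ≤
      4 * ∑ i : Fin 6, (enorm3 (F.mulVec (tetraW i)) ^ 2 - 1) ^ 2 := by
  have s3 : Real.sqrt 3 ^ 2 = 3 := Real.sq_sqrt (by norm_num)
  have s2 : Real.sqrt 2 ^ 2 = 2 := Real.sq_sqrt (by norm_num)
  have s6 : Real.sqrt 6 = Real.sqrt 3 * Real.sqrt 2 := by
    rw [← Real.sqrt_mul (by norm_num)]; norm_num
  have he : ∀ v, enorm3 v ^ 2 = ∑ i : Fin 3, v i ^ 2 := fun v =>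
    Real.sq_sqrt (by positivity)
  simp only [he]
  let g : Fin 3 → Fin 3 → ℝ := fun i j => F 0 i * F 0 j + F 1 i * F 1 j + F 2 i * F 2 j
  generalize hp : Real.sqrt 3 = p at *
  generalize hq : Real.sqrt 2 = q at *
  rw [Fin.sum_univ_six]
  refine le_trans (le_of_eq ?_) (quad_bound (g 0 0 - 1) (g 1 1 - 1) (g 2 2 - 1) (p * g 0 1)
    (q * g 1 2) (p * q * g 0 2) _ _ _ _ _ _ ?_ ?_ ?_ ?_ ?_ ?_)
  · simp [frobSq, Matrix.mul_apply, Fin.sum_univ_three, g]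
    ring_nf
    simp only [s3, s2]
    ring
  all_goals
    simp [tetraW, Matrix.mulVec, dotProduct, Fin.sum_univ_three, g, s6, hp]
    ring_nf
    try simp only [s3, s2]
    try ring_nf
    try simp only [show p ^ 2 = 3 from s3]
    try ring_nf

lemma enorm_sum (F : Matrix (Fin 3) (Fin 3) ℝ) :
    ∑ i : Fin 6, enorm3 (F.mulVec (tetraW i)) ^ 2 = 2 * frobSq F := by
  have s3 : Real.sqrt 3 ^ 2 = 3 := Real.sq_sqrt (by norm_num)
  have s6 : Real.sqrt 6 ^ 2 = 6 := Real.sq_sqrt (by norm_num)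
  have he : ∀ v, enorm3 v ^ 2 = ∑ i : Fin 3, v i ^ 2 := fun v =>
    Real.sq_sqrt (by positivity)
  simp only [he, Fin.sum_univ_six]
  simp [tetraW, Matrix.mulVec, dotProduct, Fin.sum_univ_three, frobSq]
  ring_nf
  simp only [s3, s6]
  ring

lemma frobSq_sub_one_crude (F : Matrix (Fin 3) (Fin 3) ℝ) :
    frobSq (F - 1) ≤ 2 * frobSq F + 6 := by
  simp [frobSq, Fin.sum_univ_three]
  nlinarith [sq_nonneg (F 0 0 + 1), sq_nonneg (F 1 1 + 1), sq_nonneg (F 2 2 + 1),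
    sq_nonneg (F 0 1), sq_nonneg (F 0 2), sq_nonneg (F 1 0), sq_nonneg (F 1 2),
    sq_nonneg (F 2 0), sq_nonneg (F 2 1)]

theorem tetra_rigidity :
    ∃ C > 0, ∀ F : Matrix (Fin 3) (Fin 3) ℝ, 0 < F.det →
      distSqSO3 F ≤ C * ∑ i : Fin 6, (enorm3 (F.mulVec (tetraW i)) - 1) ^ 2 := by
  refine ⟨64, by norm_num, fun F hF => ?_⟩
  have hn : ∀ i, 0 ≤ enorm3 (F.mulVec (tetraW i)) := fun i => Real.sqrt_nonneg _
  by_cases h : ∀ i, enorm3 (F.mulVec (tetraW i)) ≤ 3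
  · refine (dist_le_gram F hF).trans ((frob_gram_le F).trans ?_)
    rw [Finset.mul_sum, Finset.mul_sum]
    refine Finset.sum_le_sum fun i _ => ?_
    have a := hn i
    have b := h i
    generalize enorm3 (F.mulVec (tetraW i)) = d at a b
    have : (d ^ 2 - 1) ^ 2 = (d + 1) ^ 2 * (d - 1) ^ 2 := by ring
    have h16 : (d + 1) ^ 2 ≤ 16 := by nlinarith
    nlinarith [mul_le_mul_of_nonneg_right h16 (sq_nonneg (d - 1))]
  · push Not at h
    obtain ⟨i, hi⟩ := h
    have hone : (1 : Matrix (Fin 3) (Fin 3) ℝ) ∈ SO3 := by simp [SO3]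
    refine (dist_le F 1 hone).trans ((frobSq_sub_one_crude F).trans ?_)
    rw [← enorm_sum]
    have h1 : (enorm3 (F.mulVec (tetraW i)) - 1) ^ 2 ≤
        ∑ i : Fin 6, (enorm3 (F.mulVec (tetraW i)) - 1) ^ 2 :=
      Finset.single_le_sum (f := fun i => (enorm3 (F.mulVec (tetraW i)) - 1) ^ 2)
        (fun _ _ => sq_nonneg _) (Finset.mem_univ i)
    have h2 : ∑ i : Fin 6, enorm3 (F.mulVec (tetraW i)) ^ 2 ≤
        ∑ i : Fin 6, (2 * (enorm3 (F.mulVec (tetraW i)) - 1) ^ 2 + 2) :=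
      Finset.sum_le_sum fun i _ => by
        nlinarith [sq_nonneg (enorm3 (F.mulVec (tetraW i)) - 2)]
    rw [Finset.sum_add_distrib, ← Finset.mul_sum] at h2
    simp at h2
    nlinarith

end
end

section
/- For any two distinct points x, y of the face-centred cubic lattice Λ^fcc, the intersection C(x) ∩ C(y) of their Voronoi cells has positive two-dimensional Hausdorff measure if and only if |x − y| = 1; that is, two Voronoi cells share a facet exactly when the two lattice points are at the minimal distance 1. -/
noncomputable section

open scoped MeasureTheory

/-- Generators of the face-centred cubic lattice. -/
def vfcc : Fin 3 → EuclideanSpace ℝ (Fin 3) :=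
  ![(WithLp.equiv 2 (Fin 3 → ℝ)).symm ![Real.sqrt 2, 0, 0],
    (WithLp.equiv 2 (Fin 3 → ℝ)).symm ![Real.sqrt 2 / 2, Real.sqrt 2 / 2, 0],
    (WithLp.equiv 2 (Fin 3 → ℝ)).symm ![0, Real.sqrt 2 / 2, Real.sqrt 2 / 2]]

/-- The face-centred cubic lattice `Λ^fcc`. -/
def Lfcc : Set (EuclideanSpace ℝ (Fin 3)) :=
  {x | ∃ m : Fin 3 → ℤ,
    x = (m 0 : ℝ) • vfcc 0 + (m 1 : ℝ) • vfcc 1 + (m 2 : ℝ) • vfcc 2}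

/-- The Voronoi cell of a lattice point `x ∈ Λ^fcc`. -/
def vorFcc (x : EuclideanSpace ℝ (Fin 3)) : Set (EuclideanSpace ℝ (Fin 3)) :=
  {z | ∀ y ∈ Lfcc, dist z x ≤ dist z y}

abbrev E3 := EuclideanSpace ℝ (Fin 3)

lemma sq_s : (Real.sqrt 2 / 2) * (Real.sqrt 2 / 2) = 1 / 2 := by
  have := Real.mul_self_sqrt (show (0:ℝ) ≤ 2 by norm_num)
  nlinarith

/-- integer coordinates -/
def pt (a : Fin 3 → ℤ) : E3 := WithLp.toLp 2 (fun i => Real.sqrt 2 / 2 * (a i : ℝ))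

lemma pt_apply (a : Fin 3 → ℤ) (i : Fin 3) : pt a i = Real.sqrt 2 / 2 * (a i : ℝ) := rfl

lemma mem_L (x : E3) : x ∈ Lfcc ↔ ∃ a : Fin 3 → ℤ, Even (a 0 + a 1 + a 2) ∧ x = pt a := by
  constructor
  · rintro ⟨m, rfl⟩
    refine ⟨![2 * m 0 + m 1, m 1 + m 2, m 2], ⟨m 0 + m 1 + m 2, by simp; ring⟩, ?_⟩
    ext i
    fin_cases i <;> simp [vfcc, pt] <;> ring
  · rintro ⟨a, ⟨r, hr⟩, rfl⟩
    refine ⟨![r - a 1, a 1 - a 2, a 2], ?_⟩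
    have h0 : a 0 = 2 * r - a 1 - a 2 := by omega
    ext i
    fin_cases i <;> simp [vfcc, pt, h0] <;> ring

lemma pt_add (a b : Fin 3 → ℤ) : pt (a + b) = pt a + pt b := by
  ext i; simp [pt]; ring

lemma pt_sub (a b : Fin 3 → ℤ) : pt (a - b) = pt a - pt b := by
  ext i; simp [pt]; ring

lemma inner3 (x y : E3) : inner ℝ x y = x 0 * y 0 + x 1 * y 1 + x 2 * y 2 := by
  simp [PiLp.inner_apply, Fin.sum_univ_three]; ring

lemma inner_pt (a b : Fin 3 → ℤ) :
    inner ℝ (pt a) (pt b) = ((a 0 * b 0 + a 1 * b 1 + a 2 * b 2 : ℤ) : ℝ) / 2 := by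
  rw [inner3]; simp only [pt_apply]; push_cast
  linear_combination ((a 0 : ℝ) * b 0 + a 1 * b 1 + a 2 * b 2) * sq_s

lemma pt_eq_zero (a : Fin 3 → ℤ) (h : pt a = 0) : a = 0 := by
  have h1 := inner_pt a a
  rw [h, inner_zero_left] at h1
  have h2 : (a 0 * a 0 + a 1 * a 1 + a 2 * a 2 : ℤ) = 0 := by
    have : ((a 0 * a 0 + a 1 * a 1 + a 2 * a 2 : ℤ) : ℝ) = 0 := by linarith
    exact_mod_cast this
  ext i
  fin_cases i <;> simp <;> nlinarith [mul_self_nonneg (a 0), mul_self_nonneg (a 1), mul_self_nonneg (a 2)]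

lemma dist_le_iff (z x u : E3) :
    dist z x ≤ dist z (x + u) ↔ 2 * inner ℝ (z - x) u ≤ inner ℝ u u := by
  rw [dist_eq_norm, dist_eq_norm, ← sq_le_sq₀ (norm_nonneg _) (norm_nonneg _),
    show z - (x + u) = (z - x) - u by abel, @norm_sub_sq_real _ _ _ (z - x) u, real_inner_self_eq_norm_sq]
  constructor <;> intro h <;> linarith

lemma mem_vor (b : Fin 3 → ℤ) (hb : Even (b 0 + b 1 + b 2)) (z : E3) :
    z ∈ vorFcc (pt b) ↔ ∀ u : Fin 3 → ℤ, Even (u 0 + u 1 + u 2) →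
      2 * inner ℝ (z - pt b) (pt u) ≤ inner ℝ (pt u) (pt u) := by
  constructor
  · intro h u hu
    rw [← dist_le_iff]
    apply h
    rw [mem_L]
    refine ⟨b + u, ?_, (pt_add _ _).symm⟩
    obtain ⟨r, hr⟩ := hb
    obtain ⟨q, hq⟩ := hu
    exact ⟨r + q, by simp; omega⟩
  · intro h y hy
    obtain ⟨a, ha, rfl⟩ := (mem_L y).1 hy
    have := h (a - b) (by
      obtain ⟨r, hr⟩ := hb
      obtain ⟨q, hq⟩ := ha
      exact ⟨q - r, by simp; omega⟩)
    rw [← dist_le_iff, ← pt_add] at this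
    simpa using this

lemma exists_u (w : Fin 3 → ℤ) (hw : Even (w 0 + w 1 + w 2)) (h0 : w ≠ 0)
    (h2 : w 0 * w 0 + w 1 * w 1 + w 2 * w 2 ≠ 2) :
    ∃ u : Fin 3 → ℤ, Even (u 0 + u 1 + u 2) ∧ u ≠ 0 ∧ u ≠ w ∧
      u 0 * u 0 + u 1 * u 1 + u 2 * u 2 ≤ u 0 * w 0 + u 1 * w 1 + u 2 * w 2 := by
  have key : ∀ t : ℤ, ∃ e : ℤ, (e = 1 ∨ e = -1) ∧ e * t = |t| := by
    intro t
    rcases le_total 0 t with h | h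
    · exact ⟨1, by simp, by rw [abs_of_nonneg h]; ring⟩
    · exact ⟨-1, by simp, by rw [abs_of_nonpos h]; ring⟩
  obtain ⟨e0, he0, k0⟩ := key (w 0)
  obtain ⟨e1, he1, k1⟩ := key (w 1)
  obtain ⟨e2, he2, k2⟩ := key (w 2)
  have s0 : e0 * e0 = 1 := by rcases he0 with rfl | rfl <;> rfl
  have s1 : e1 * e1 = 1 := by rcases he1 with rfl | rfl <;> rfl
  have s2 : e2 * e2 = 1 := by rcases he2 with rfl | rfl <;> rfl
  have hex : 2 ≤ |w 0| + |w 1| ∨ 2 ≤ |w 0| + |w 2| ∨ 2 ≤ |w 1| + |w 2| := by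
    by_contra hcon
    apply h0
    obtain ⟨r, hr⟩ := hw
    have l0 := abs_cases (w 0)
    have l1 := abs_cases (w 1)
    have l2 := abs_cases (w 2)
    clear h2 k0 k1 k2 s0 s1 s2
    have : w 0 = 0 ∧ w 1 = 0 ∧ w 2 = 0 := by omega
    ext i
    fin_cases i <;> simp [this]
  rcases hex with h | h | h
  · refine ⟨![e0, e1, 0], ?_, ?_, ?_, ?_⟩
    · simp only [Matrix.cons_val]
      rcases he0 with rfl | rfl <;> rcases he1 with rfl | rfl <;> decide
    · intro hh
      have := congrFun hh 0
      simp at this; omega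
    · intro hh; apply h2
      rw [← hh]; simp; omega
    · simp; omega
  · refine ⟨![e0, 0, e2], ?_, ?_, ?_, ?_⟩
    · simp only [Matrix.cons_val]
      rcases he0 with rfl | rfl <;> rcases he2 with rfl | rfl <;> decide
    · intro hh
      have := congrFun hh 0
      simp at this; omega
    · intro hh; apply h2
      rw [← hh]; simp; omega
    · simp; omega
  · refine ⟨![0, e1, e2], ?_, ?_, ?_, ?_⟩
    · simp only [Matrix.cons_val]
      rcases he1 with rfl | rfl <;> rcases he2 with rfl | rfl <;> decide
    · intro hh
      have := congrFun hh 1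
      simp at this; omega
    · intro hh; apply h2
      rw [← hh]; simp; omega
    · simp; omega

lemma measure_zero (S : Set E3) (u v : E3) (hu : u ≠ 0) (hv : v ≠ 0) (huv : inner ℝ u v = 0)
    (c d : ℝ) (x : E3) (hS : ∀ z ∈ S, inner ℝ (z - x) u = c ∧ inner ℝ (z - x) v = d) :
    μH[2] S = 0 := by
  rcases S.eq_empty_or_nonempty with rfl | ⟨z0, hz0⟩
  · simp
  have hli : LinearIndependent ℝ ![u, v] := by
    apply linearIndependent_of_ne_zero_of_inner_eq_zero (𝕜 := ℝ)
    · intro i; fin_cases i <;> simpa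
    · intro i j hij
      fin_cases i <;> fin_cases j <;> simp_all [real_inner_comm]
  set W : Submodule ℝ E3 := Submodule.span ℝ (Set.range ![u, v]) with hW
  have hfr : Module.finrank ℝ W = 2 := by
    rw [hW, finrank_span_eq_card hli]; simp
  have hfr' : Module.finrank ℝ Wᗮ = 1 := by
    have := Submodule.finrank_add_finrank_orthogonal W
    simp at this
    omega
  have hsub : S ⊆ Set.range (fun w : Wᗮ => z0 + (w : E3)) := by
    intro z hz
    refine ⟨⟨z - z0, ?_⟩, by simp⟩
    rw [Submodule.mem_orthogonal']
    intro y hy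
    have e : z - z0 = (z - x) - (z0 - x) := by abel
    have h1 : inner ℝ (z - z0) u = 0 := by
      rw [e, inner_sub_left, (hS z hz).1, (hS z0 hz0).1, sub_self]
    have h2 : inner ℝ (z - z0) v = 0 := by
      rw [e, inner_sub_left, (hS z hz).2, (hS z0 hz0).2, sub_self]
    induction hy using Submodule.span_induction with
    | mem y hy =>
      obtain ⟨i, rfl⟩ := hy
      fin_cases i
      · exact h1
      · exact h2
    | zero => simp
    | add a b _ _ ha hb => rw [inner_add_right, ha, hb, add_zero]
    | smul r a _ ha => rw [inner_smul_right, ha, mul_zero]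
  have hd : dimH S ≤ 1 := by
    refine (dimH_mono hsub).trans ?_
    have : ContDiff ℝ 1 (fun w : Wᗮ => z0 + (w : E3)) :=
      contDiff_const.add Wᗮ.subtypeL.contDiff
    have := this.dimH_range_le
    rw [hfr'] at this
    simpa using this
  have := hausdorffMeasure_of_dimH_lt (s := S) (d := 2) (lt_of_le_of_lt hd (by norm_num))
  simpa using this

lemma int_ineq (A B C : ℤ) (h : Even (A + B + C)) (T U : ℝ) (hT : |T| ≤ 1 / 4)
    (hU : |U| ≤ 1 / 4) :
    2 * (A * (1 / 2 + T) + B * (1 / 2 - T) + C * U) ≤ (A * A + B * B + C * C : ℝ) := by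
  have hz : |A - B| + |C| ≤ 2 * (A * A + B * B + C * C - A - B) := by
    have q : ∀ t : ℤ, t * t - t ≥ 0 ∧ t * t + t ≥ 0 ∧ (t - 1) * (t - 2) ≥ 0 := by
      intro t
      refine ⟨?_, ?_, ?_⟩
      · rcases le_or_gt t 0 with h | h <;> nlinarith
      · rcases le_or_gt 0 t with h | h <;> nlinarith
      · rcases le_or_gt t 1 with h | h <;> nlinarith
    have pA := q A
    have pB := q B
    have pC := q C
    obtain ⟨r, hr⟩ := h
    by_cases hA : (0 ≤ A ∧ A ≤ 1)
    · by_cases hB : (0 ≤ B ∧ B ≤ 1)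
      · have eA : A * A = A := by nlinarith
        have eB : B * B = B := by nlinarith
        rw [eA, eB]
        rcases abs_cases C with ⟨h1, h2⟩ | ⟨h1, h2⟩ <;>
        rcases abs_cases (A - B) with ⟨h3, h4⟩ | ⟨h3, h4⟩ <;> rw [h1, h3] <;>
        rcases (by omega : C = 0 ∨ C ≥ 1 ∨ C ≤ -1) with rfl | h5 | h5 <;> omega
      · have eA : A * A = A := by nlinarith
        rw [eA]
        rcases (by omega : B ≥ 2 ∨ B ≤ -1) with h5 | h5 <;>
        rcases abs_cases C with ⟨h1, h2⟩ | ⟨h1, h2⟩ <;>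
        rcases abs_cases (A - B) with ⟨h3, h4⟩ | ⟨h3, h4⟩ <;> rw [h1, h3] <;> nlinarith
    · rcases (by omega : A ≥ 2 ∨ A ≤ -1) with h5 | h5 <;>
      rcases abs_cases C with ⟨h1, h2⟩ | ⟨h1, h2⟩ <;>
      rcases abs_cases (A - B) with ⟨h3, h4⟩ | ⟨h3, h4⟩ <;> rw [h1, h3] <;> nlinarith
  have hz' : |(A : ℝ) - B| + |(C : ℝ)| ≤ 2 * (A * A + B * B + C * C - A - B) := by exact_mod_cast hz
  have h1 : ((A : ℝ) - B) * T ≤ |(A : ℝ) - B| * (1 / 4) := by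
    refine (le_abs_self _).trans ?_
    rw [abs_mul]; gcongr
  have h2 : (C : ℝ) * U ≤ |(C : ℝ)| * (1 / 4) := by
    refine (le_abs_self _).trans ?_
    rw [abs_mul]; gcongr
  linarith

lemma sign_even (w a : ℤ) (hw : w = 1 ∨ w = -1) : ∃ q, w * a = a + 2 * q := by
  rcases hw with rfl | rfl
  · exact ⟨0, by ring⟩
  · exact ⟨-a, by ring⟩

lemma measure_pos (b w : Fin 3 → ℤ) (hb : Even (b 0 + b 1 + b 2)) (hw : Even (w 0 + w 1 + w 2))
    (i j k : Fin 3) (hij : i ≠ j) (hik : i ≠ k) (hjk : j ≠ k)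
    (hi : w i = 1 ∨ w i = -1) (hj : w j = 1 ∨ w j = -1) (hk : w k = 0) :
    0 < μH[2] (vorFcc (pt b) ∩ vorFcc (pt (b + w))) := by
  have hsumR : ∀ f : Fin 3 → ℝ, f 0 + f 1 + f 2 = f i + f j + f k := by
    intro f
    fin_cases i <;> fin_cases j <;> fin_cases k <;> simp at hij hik hjk ⊢ <;> ring
  have hsumZ : ∀ f : Fin 3 → ℤ, f 0 + f 1 + f 2 = f i + f j + f k := by
    intro f
    fin_cases i <;> fin_cases j <;> fin_cases k <;> simp at hij hik hjk ⊢ <;> ring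
  set s : ℝ := Real.sqrt 2 / 2 with hs
  have spos : 0 < s := by positivity
  have ssq : s * s = 1 / 2 := sq_s
  have wi2 : (w i : ℝ) * w i = 1 := by rcases hi with h | h <;> rw [h] <;> norm_num
  have wj2 : (w j : ℝ) * w j = 1 := by rcases hj with h | h <;> rw [h] <;> norm_num
  have wiabs : |(w i : ℝ)| = 1 := by rcases hi with h | h <;> rw [h] <;> norm_num
  let f : E3 → (Fin 2 → ℝ) := fun z => ![z i, z k]
  have hf : LipschitzWith 1 f := by
    apply LipschitzWith.of_dist_le_mul
    intro y z
    rw [NNReal.coe_one, one_mul, dist_pi_le_iff dist_nonneg]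
    intro l
    have : ∀ m, dist (y m) (z m) ≤ dist y z := by
      intro m
      rw [dist_eq_norm, dist_eq_norm]
      exact PiLp.norm_apply_le (y - z) m
    fin_cases l
    · exact this i
    · exact this k
  set c : Fin 2 → ℝ := ![pt b i + s * w i / 2, pt b k] with hc
  have hsub : Metric.ball c (s / 4) ⊆ f '' (vorFcc (pt b) ∩ vorFcc (pt (b + w))) := by
    intro p hp
    rw [Metric.mem_ball, dist_pi_lt_iff (by positivity)] at hp
    have hp0 : |p 0 - (pt b i + s * w i / 2)| < s / 4 := by
      have := hp 0; rwa [Real.dist_eq] at this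
    have hp1 : |p 1 - pt b k| < s / 4 := by
      have := hp 1; rwa [Real.dist_eq] at this
    obtain ⟨T, hT⟩ : ∃ T, T = w i * (p 0 - (pt b i + s * w i / 2)) / s := ⟨_, rfl⟩
    obtain ⟨U, hU⟩ : ∃ U, U = (p 1 - pt b k) / s := ⟨_, rfl⟩
    have hTa : |T| ≤ 1 / 4 := by
      rw [hT, abs_div, abs_mul, wiabs, one_mul, abs_of_pos spos, div_le_iff₀ spos]; linarith
    have hUa : |U| ≤ 1 / 4 := by
      rw [hU, abs_div, abs_of_pos spos, div_le_iff₀ spos]; linarith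
    have hT' : s * T = w i * (p 0 - (pt b i + s * w i / 2)) := by rw [hT]; field_simp
    have hU' : s * U = p 1 - pt b k := by rw [hU]; field_simp
    let g : Fin 3 → ℝ := fun l => if l = i then s * (w i * (1 / 2 + T)) else
      if l = j then s * (w j * (1 / 2 - T)) else s * U
    have gi : g i = s * (w i * (1 / 2 + T)) := by simp [g]
    have gj : g j = s * (w j * (1 / 2 - T)) := by simp [g, hij.symm]
    have gk : g k = s * U := by simp [g, hik.symm, hjk.symm]
    let z : E3 := pt b + WithLp.toLp 2 g
    have hin : ∀ a : Fin 3 → ℤ, 2 * inner ℝ (z - pt b) (pt a) =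
        w i * a i * (1 / 2 + T) + w j * a j * (1 / 2 - T) + a k * U := by
      intro a
      have : z - pt b = WithLp.toLp 2 g := by simp [z]
      rw [this, inner3, hsumR (fun l => (WithLp.toLp 2 g : E3) l * pt a l)]
      simp only [pt_apply, gi, gj, gk, ← hs]
      linear_combination 2 * (w i * a i * (1 / 2 + T) + w j * a j * (1 / 2 - T) + a k * U) * ssq
    have hzx : z ∈ vorFcc (pt b) := by
      rw [mem_vor b hb]
      intro a ha
      rw [hin, inner_pt, hsumZ (fun l => a l * a l)]
      rw [hsumZ a] at ha
      obtain ⟨q1, h1⟩ := sign_even (w i) (a i) hi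
      obtain ⟨q2, h2⟩ := sign_even (w j) (a j) hj
      have := int_ineq (w i * a i) (w j * a j) (a k) (by
        obtain ⟨r, hr⟩ := ha
        exact ⟨r + q1 + q2, by rw [h1, h2]; linarith⟩) T U hTa hUa
      push_cast at this ⊢
      have e1 : (w i * a i * (w i * a i) : ℝ) = a i * a i := by
        linear_combination (a i * a i : ℝ) * wi2
      have e2 : (w j * a j * (w j * a j) : ℝ) = a j * a j := by
        linear_combination (a j * a j : ℝ) * wj2
      rw [e1, e2] at this
      linarith
    refine ⟨z, ⟨hzx, ?_⟩, ?_⟩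
    · intro y hy
      refine le_trans ?_ (hzx y hy)
      have h1 := hin w
      rw [hk, wi2, wj2] at h1
      have h2 := inner_pt w w
      rw [hsumZ (fun l => w l * w l), hk] at h2
      push_cast at h1 h2
      rw [wi2, wj2] at h2
      rw [pt_add, dist_eq_norm, dist_eq_norm, ← sq_le_sq₀ (norm_nonneg _) (norm_nonneg _),
        show z - (pt b + pt w) = (z - pt b) - pt w by abel, @norm_sub_sq_real _ _ _ (z - pt b),
        ← real_inner_self_eq_norm_sq (pt w)]
      linarith
    · ext l
      fin_cases l
      · change pt b i + g i = p 0
        rw [gi]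
        linear_combination (w i : ℝ) * hT' + (p 0 - (pt b i + s * w i / 2)) * wi2
      · change pt b k + g k = p 1
        rw [gk]; linarith
  have h1 := hf.hausdorffMeasure_image_le (d := 2) (by norm_num)
    (vorFcc (pt b) ∩ vorFcc (pt (b + w)))
  have h2 : 0 < μH[2] (Metric.ball c (s / 4)) := by
    have : (μH[2] : MeasureTheory.Measure (Fin 2 → ℝ)) = MeasureTheory.volume := by
      have := MeasureTheory.hausdorffMeasure_pi_real (ι := Fin 2)
      simpa using this
    rw [this]
    exact Metric.measure_ball_pos _ _ (by positivity)
  have h3 := lt_of_lt_of_le h2 ((MeasureTheory.measure_mono hsub).trans h1)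
  simpa using h3

theorem fcc_voronoi_facets (x y : EuclideanSpace ℝ (Fin 3))
    (hx : x ∈ Lfcc) (hy : y ∈ Lfcc) (hxy : x ≠ y) :
    0 < μH[2] (vorFcc x ∩ vorFcc y) ↔ dist x y = 1 := by
  obtain ⟨b, hb, rfl⟩ := (mem_L x).1 hx
  obtain ⟨a, ha, rfl⟩ := (mem_L y).1 hy
  obtain ⟨w, rfl⟩ : ∃ w, a = b + w := ⟨a - b, by simp⟩
  have hw : Even (w 0 + w 1 + w 2) := by
    obtain ⟨r, hr⟩ := hb
    obtain ⟨q, hq⟩ := ha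
    simp only [Pi.add_apply] at hq
    exact ⟨q - r, by omega⟩
  have hw0 : w ≠ 0 := by rintro rfl; simp at hxy
  have hdist : dist (pt b) (pt (b + w)) = 1 ↔ w 0 * w 0 + w 1 * w 1 + w 2 * w 2 = 2 := by
    have e : dist (pt b) (pt (b + w)) ^ 2 = ((w 0 * w 0 + w 1 * w 1 + w 2 * w 2 : ℤ) : ℝ) / 2 := by
      rw [dist_comm, dist_eq_norm, ← real_inner_self_eq_norm_sq, pt_add, add_sub_cancel_left,
        inner_pt]
    constructor
    · intro h
      rw [h] at e
      have : ((w 0 * w 0 + w 1 * w 1 + w 2 * w 2 : ℤ) : ℝ) = (2 : ℤ) := by push_cast at e ⊢; linarith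
      exact_mod_cast this
    · intro h
      rw [h] at e
      have h0 := dist_nonneg (x := pt b) (y := pt (b + w))
      push_cast at e
      nlinarith
  rw [hdist]
  constructor
  · intro hpos
    by_contra h2
    obtain ⟨u, hu, hu0, huw, hle⟩ := exists_u w hw hw0 h2
    apply hpos.ne'
    obtain ⟨v, rfl⟩ : ∃ v, w = u + v := ⟨w - u, by simp⟩
    have hv0 : v ≠ 0 := by rintro rfl; simp at huw
    have hv : Even (v 0 + v 1 + v 2) := by
      obtain ⟨r, hr⟩ := hu
      obtain ⟨q, hq⟩ := hw
      simp only [Pi.add_apply] at hq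
      exact ⟨q - r, by omega⟩
    have huv : 0 ≤ inner ℝ (pt u) (pt v) := by
      rw [inner_pt]
      have : 0 ≤ u 0 * v 0 + u 1 * v 1 + u 2 * v 2 := by
        simp only [Pi.add_apply] at hle; linarith
      have : (0:ℝ) ≤ ((u 0 * v 0 + u 1 * v 1 + u 2 * v 2 : ℤ) : ℝ) := by exact_mod_cast this
      positivity
    have key : ∀ z ∈ vorFcc (pt b) ∩ vorFcc (pt (b + (u + v))),
        inner ℝ (z - pt b) (pt u) = inner ℝ (pt u) (pt u) / 2 ∧
        inner ℝ (z - pt b) (pt v) = inner ℝ (pt v) (pt v) / 2 ∧ inner ℝ (pt u) (pt v) = 0 := by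
      rintro z ⟨h1, h2⟩
      have a1 := (mem_vor b hb z).1 h1 u hu
      have a2 := (mem_vor b hb z).1 h1 v hv
      have a3 : ¬ (dist z (pt b) < dist z (pt b + pt (u + v))) := by
        rw [← pt_add]; exact not_lt.2 (h2 _ hx)
      have a4 : inner ℝ (pt (u + v)) (pt (u + v)) ≤ 2 * inner ℝ (z - pt b) (pt (u + v)) := by
        by_contra hc
        apply a3
        rw [dist_eq_norm, dist_eq_norm, ← sq_lt_sq₀ (norm_nonneg _) (norm_nonneg _),
          show z - (pt b + pt (u + v)) = (z - pt b) - pt (u + v) by abel,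
          @norm_sub_sq_real _ _ _ (z - pt b), ← real_inner_self_eq_norm_sq (pt (u + v))]
        linarith
      rw [pt_add, inner_add_right, inner_add_right, inner_add_left, inner_add_left,
        real_inner_comm (pt u) (pt v)] at a4
      refine ⟨?_, ?_, ?_⟩ <;> linarith [real_inner_comm (pt u) (pt v)]
    rcases (vorFcc (pt b) ∩ vorFcc (pt (b + (u + v)))).eq_empty_or_nonempty with he | ⟨z, hz⟩
    · rw [he]; simp
    · exact measure_zero _ (pt u) (pt v) (fun h => hu0 (pt_eq_zero _ h))
        (fun h => hv0 (pt_eq_zero _ h)) (key z hz).2.2 _ _ (pt b)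
        (fun z hz => ⟨(key z hz).1, (key z hz).2.1⟩)
  · intro h
    have bd : ∀ t : ℤ, t * t ≤ 2 → t = 0 ∨ t = 1 ∨ t = -1 := by
      intro t ht
      have : t ≤ 1 := by nlinarith
      have : -1 ≤ t := by nlinarith
      omega
    have c0 := bd (w 0) (by nlinarith [mul_self_nonneg (w 1), mul_self_nonneg (w 2)])
    have c1 := bd (w 1) (by nlinarith [mul_self_nonneg (w 0), mul_self_nonneg (w 2)])
    have c2 := bd (w 2) (by nlinarith [mul_self_nonneg (w 1), mul_self_nonneg (w 0)])
    have : (w 0 = 0 ∧ w 1 ≠ 0 ∧ w 2 ≠ 0) ∨ (w 1 = 0 ∧ w 0 ≠ 0 ∧ w 2 ≠ 0) ∨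
        (w 2 = 0 ∧ w 0 ≠ 0 ∧ w 1 ≠ 0) := by
      rcases c0 with h0 | h0 | h0 <;> rcases c1 with h1 | h1 | h1 <;>
      rcases c2 with h2 | h2 | h2 <;> simp [h0, h1, h2] at h ⊢
    rcases this with ⟨e0, e1, e2⟩ | ⟨e0, e1, e2⟩ | ⟨e0, e1, e2⟩
    · exact measure_pos b w hb hw 1 2 0 (by decide) (by decide) (by decide) (by tauto) (by tauto) e0
    · exact measure_pos b w hb hw 0 2 1 (by decide) (by decide) (by decide) (by tauto) (by tauto) e0
    · exact measure_pos b w hb hw 0 1 2 (by decide) (by decide) (by decide) (by tauto) (by tauto) e0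

end
end
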